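/- The diagonal maps D_1 = diag(1,0,0,0,1,1,1) and D_2 = diag(0,1,1,2,1,1,2) are derivations of g_{2.2}, and φ = (1/2)(D_1 + D_2) = (1/2) diag(1,1,1,2,2,2,3) is a pre-Einstein derivation of g_{2.2}: φ is a diagonal derivation with tr(φ ∘ ψ) = tr(ψ) for every derivation ψ of g_{2.2}. -/

import Mathlib

open Matrix BigOperators Polynomial

noncomputable section

abbrev Law (n : ℕ) := (Fin n → ℝ) → (Fin n → ℝ) → (Fin n → ℝ)

/-- `i`-th canonical basis vector of `ℝ^n`. -/
def bVec {n : ℕ} (i : Fin n) : Fin n → ℝ := Pi.single i 1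

def IsBilin {n : ℕ} (μ : Law n) : Prop :=
  (∀ X, IsLinearMap ℝ (μ X)) ∧ (∀ Y, IsLinearMap ℝ (fun X => μ X Y))

def IsSkew {n : ℕ} (μ : Law n) : Prop := ∀ X Y, μ X Y = - μ Y X

def IsJacobi {n : ℕ} (μ : Law n) : Prop :=
  ∀ X Y Z, μ (μ X Y) Z + μ (μ Y Z) X + μ (μ Z X) Y = 0

def IsLieLaw {n : ℕ} (μ : Law n) : Prop := IsBilin μ ∧ IsSkew μ ∧ IsJacobi μ

/-- lower central series of the law `μ`. -/
def lcs {n : ℕ} (μ : Law n) : ℕ → Submodule ℝ (Fin n → ℝ)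
  | 0 => ⊤
  | k + 1 => Submodule.span ℝ {z | ∃ x y, y ∈ lcs μ k ∧ z = μ x y}

def IsNilpotentLaw {n : ℕ} (μ : Law n) : Prop :=
  IsLieLaw μ ∧ ∃ k, lcs μ k = ⊥

/-- the action of `GL_n(ℝ)` on laws: `(g·μ)(X,Y) = g μ(g⁻¹X, g⁻¹Y)`. -/
def act {n : ℕ} (g : GL (Fin n) ℝ) (μ : Law n) : Law n :=
  fun X Y =>
    (g : Matrix (Fin n) (Fin n) ℝ).mulVec
      (μ (((g⁻¹ : GL (Fin n) ℝ) : Matrix (Fin n) (Fin n) ℝ).mulVec X)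
         (((g⁻¹ : GL (Fin n) ℝ) : Matrix (Fin n) (Fin n) ℝ).mulVec Y))

def IsDerivation {n : ℕ} (μ : Law n) (ψ : Matrix (Fin n) (Fin n) ℝ) : Prop :=
  ∀ X Y, ψ.mulVec (μ X Y) = μ (ψ.mulVec X) Y + μ X (ψ.mulVec Y)

/-- the unnormalized moment map `m(μ) = 4 Ric_μ`, as a matrix in the canonical basis. -/
def momentMap {n : ℕ} (μ : Law n) : Matrix (Fin n) (Fin n) ℝ :=
  Matrix.of fun k l =>
    4 * (-(1/2) * ∑ i, ∑ j, μ (bVec k) (bVec i) j * μ (bVec l) (bVec i) j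
      + (1/4) * ∑ i, ∑ j, μ (bVec i) (bVec j) k * μ (bVec i) (bVec j) l)

def IsEinsteinNilradical {n : ℕ} (μ : Law n) : Prop :=
  ∃ g : GL (Fin n) ℝ, ∃ c : ℝ, ∃ φ : Matrix (Fin n) (Fin n) ℝ,
    c < 0 ∧ φ.IsSymm ∧ IsDerivation (act g μ) φ ∧
    momentMap (act g μ) = c • (1 : Matrix (Fin n) (Fin n) ℝ) + φ

/-- build a (bilinear) law from a table `c` of structure constants on the
canonical basis, antisymmetrized: `[e_i, e_j] = c i j - c j i`. -/
def mkLaw {n : ℕ} (c : Fin n → Fin n → Fin n → ℝ) : Law n :=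
  fun X Y k => ∑ i, ∑ j, X i * Y j * (c i j k - c j i k)

/-- structure constants of `g_{2.2}`. -/
def c22 : Fin 7 → Fin 7 → Fin 7 → ℝ := fun i j =>
  if i = 0 ∧ j = 1 then Pi.single 4 1
  else if i = 0 ∧ j = 2 then Pi.single 5 1
  else if i = 0 ∧ j = 3 then Pi.single 6 2
  else if i = 1 ∧ j = 2 then Pi.single 3 1
  else if i = 1 ∧ j = 5 then Pi.single 6 1
  else if i = 2 ∧ j = 4 then Pi.single 6 (-1)
  else if i = 2 ∧ j = 5 then Pi.single 6 1
  else 0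

/-- the Lie algebra law of `g_{2.2}`. -/
def law22 : Law 7 := mkLaw c22

/-! A diagonal matrix is a derivation exactly when `dₖ = dᵢ + dⱼ` whenever `eₖ` occurs in
`[eᵢ, eⱼ]`; this gives `D₁` and `D₂`, and `φ` follows since derivations form a subspace. Conversely,
if `[eᵢ, eⱼ]` is a nonzero multiple of `eₖ` and no other `[eₗ, eⱼ]` or `[eᵢ, eₗ]` has an
`eₖ`-component, then every derivation `ψ`, diagonal or not, satisfies `ψₖₖ = ψᵢᵢ + ψⱼⱼ`. For
`g_{2.2}` the brackets `[e₁, e₄]` and `[e₂, e₃]` give `ψ₇₇ = ψ₁₁ + ψ₂₂ + ψ₃₃`, while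
`2 (tr (φ ψ) - tr ψ) = ψ₇₇ - ψ₁₁ - ψ₂₂ - ψ₃₃`. Indices here start at `1`, in the code at `0`. -/

section Bilinear

variable {n : ℕ} {μ : Law n}

lemma IsBilin.exists_linearMap (hμ : IsBilin μ) :
    ∃ B : (Fin n → ℝ) →ₗ[ℝ] (Fin n → ℝ) →ₗ[ℝ] (Fin n → ℝ), μ = fun X Y => B X Y :=
  ⟨LinearMap.mk₂ ℝ μ (fun X X' Y => (hμ.2 Y).map_add X X') (fun a X Y => (hμ.2 Y).map_smul a X)
    (fun X => (hμ.1 X).map_add) (fun a X => (hμ.1 X).map_smul a), rfl⟩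

lemma IsDerivation.add (hμ : IsBilin μ) {ψ χ : Matrix (Fin n) (Fin n) ℝ}
    (hψ : IsDerivation μ ψ) (hχ : IsDerivation μ χ) : IsDerivation μ (ψ + χ) := by
  obtain ⟨B, rfl⟩ := hμ.exists_linearMap
  intro X Y
  simp only [add_mulVec, map_add, LinearMap.add_apply, hψ X Y, hχ X Y]
  abel

lemma IsDerivation.smul (hμ : IsBilin μ) (a : ℝ) {ψ : Matrix (Fin n) (Fin n) ℝ}
    (hψ : IsDerivation μ ψ) : IsDerivation μ (a • ψ) := by
  obtain ⟨B, rfl⟩ := hμ.exists_linearMap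
  intro X Y
  simp only [smul_mulVec, map_smul, LinearMap.smul_apply, hψ X Y, smul_add]

lemma isDerivation_iff_bVec (hμ : IsBilin μ) {ψ : Matrix (Fin n) (Fin n) ℝ} :
    IsDerivation μ ψ ↔ ∀ i j, ψ *ᵥ μ (bVec i) (bVec j) =
      μ (ψ *ᵥ bVec i) (bVec j) + μ (bVec i) (ψ *ᵥ bVec j) := by
  refine ⟨fun hψ i j => hψ _ _, fun hψ => ?_⟩
  obtain ⟨B, rfl⟩ := hμ.exists_linearMap
  have B_ψ_eq : B.compr₂ ψ.mulVecLin = B.comp ψ.mulVecLin + B.compl₂ ψ.mulVecLin :=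
    LinearMap.ext_basis (Pi.basisFun ℝ (Fin n)) (Pi.basisFun ℝ (Fin n)) fun i j => by
      rw [Pi.basisFun_apply, Pi.basisFun_apply]
      exact hψ i j
  exact fun X Y => LinearMap.congr_fun₂ B_ψ_eq X Y

lemma isDerivation_diagonal_iff (hμ : IsBilin μ) {d : Fin n → ℝ} :
    IsDerivation μ (diagonal d) ↔
      ∀ i j k, μ (bVec i) (bVec j) k ≠ 0 → d k = d i + d j := by
  have diagonal_mulVec_bVec (i : Fin n) : diagonal d *ᵥ bVec i = d i • bVec i := by
    simp [bVec, ← Pi.single_smul]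
  rw [isDerivation_iff_bVec hμ]
  obtain ⟨B, rfl⟩ := hμ.exists_linearMap
  simp only [diagonal_mulVec_bVec, map_smul, LinearMap.smul_apply, ← add_smul, funext_iff,
    mulVec_diagonal, Pi.smul_apply, smul_eq_mul, mul_eq_mul_right_iff, or_iff_not_imp_right, ne_eq]

lemma apply_eq_mul_of_bVec_eq_zero {f : (Fin n → ℝ) →ₗ[ℝ] ℝ} {i : Fin n}
    (hf : ∀ l ≠ i, f (bVec l) = 0) (X : Fin n → ℝ) : f X = X i * f (bVec i) := by
  have f_eq : f = f (bVec i) • LinearMap.proj i := by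
    refine (Pi.basisFun ℝ (Fin n)).ext fun l => ?_
    obtain rfl | hl := eq_or_ne l i
    · simp [bVec]
    · simpa [bVec, hl.symm] using hf l hl
  simpa [mul_comm] using LinearMap.congr_fun f_eq X

lemma IsDerivation.diag_eq_add_diag (hμ : IsBilin μ) {ψ : Matrix (Fin n) (Fin n) ℝ}
    (hψ : IsDerivation μ ψ) {i j k : Fin n} {a : ℝ} (ha : a ≠ 0)
    (hij : μ (bVec i) (bVec j) = Pi.single k a)
    (hi : ∀ l ≠ i, μ (bVec l) (bVec j) k = 0) (hj : ∀ l ≠ j, μ (bVec i) (bVec l) k = 0) :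
    ψ k k = ψ i i + ψ j j := by
  have hij_k : μ (bVec i) (bVec j) k = a := by rw [hij, Pi.single_eq_same]
  obtain ⟨B, rfl⟩ := hμ.exists_linearMap
  have mulVec_bVec (l : Fin n) : (ψ *ᵥ bVec l) l = ψ l l := by simp [bVec]
  have left_term : B (ψ *ᵥ bVec i) (bVec j) k = ψ i i * a := by
    rw [← hij_k, ← mulVec_bVec]
    exact apply_eq_mul_of_bVec_eq_zero (f := LinearMap.proj k ∘ₗ B.flip (bVec j)) hi _
  have right_term : B (bVec i) (ψ *ᵥ bVec j) k = ψ j j * a := by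
    rw [← hij_k, ← mulVec_bVec]
    exact apply_eq_mul_of_bVec_eq_zero (f := LinearMap.proj k ∘ₗ B (bVec i)) hj _
  have derivation_coord : ψ k k * a = ψ i i * a + ψ j j * a := by
    simpa [hij, left_term, right_term] using congrFun (hψ (bVec i) (bVec j)) k
  exact mul_right_cancel₀ ha (derivation_coord.trans (add_mul _ _ _).symm)

end Bilinear

section StructureConstants

variable {n : ℕ} (c : Fin n → Fin n → Fin n → ℝ)

lemma isBilin_mkLaw : IsBilin (mkLaw c) := by
  refine ⟨fun X => ⟨fun Y Y' => ?_, fun a Y => ?_⟩, fun Y => ⟨fun X X' => ?_, fun a X => ?_⟩⟩ <;>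
    ext k <;>
    simp only [mkLaw, Pi.add_apply, Pi.smul_apply, smul_eq_mul, Finset.mul_sum,
      ← Finset.sum_add_distrib] <;>
    exact Finset.sum_congr rfl fun i _ => Finset.sum_congr rfl fun j _ => by ring

lemma mkLaw_bVec (i j : Fin n) : mkLaw c (bVec i) (bVec j) = c i j - c j i := by
  ext k
  simp [mkLaw, bVec, Pi.single_apply]

variable {c} in
lemma isDerivation_mkLaw_diagonal {d : Fin n → ℝ}
    (hd : ∀ i j k, c i j k ≠ 0 → d k = d i + d j) : IsDerivation (mkLaw c) (diagonal d) := by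
  refine (isDerivation_diagonal_iff (isBilin_mkLaw c)).2 fun i j k hijk => ?_
  rw [mkLaw_bVec, Pi.sub_apply] at hijk
  by_cases hij : c i j k = 0
  · rw [add_comm]
    exact hd j i k fun hji => hijk (by rw [hij, hji, sub_zero])
  · exact hd i j k hij

end StructureConstants

lemma isBilin_law22 : IsBilin law22 := isBilin_mkLaw c22

lemma law22_bVec (i j : Fin 7) : law22 (bVec i) (bVec j) = c22 i j - c22 j i :=
  mkLaw_bVec c22 i j

lemma isDerivation_law22_diagonal {d : Fin 7 → ℝ} (h₀₁ : d 4 = d 0 + d 1) (h₀₂ : d 5 = d 0 + d 2)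
    (h₀₃ : d 6 = d 0 + d 3) (h₁₂ : d 3 = d 1 + d 2) (h₁₅ : d 6 = d 1 + d 5)
    (h₂₄ : d 6 = d 2 + d 4) (h₂₅ : d 6 = d 2 + d 5) :
    IsDerivation law22 (diagonal d) := by
  refine isDerivation_mkLaw_diagonal fun i j k hijk => ?_
  unfold c22 at hijk
  split_ifs at hijk <;> simp_all [Pi.single_apply]

lemma isDerivation_law22_D₁ : IsDerivation law22 (diagonal ![1, 0, 0, 0, 1, 1, 1]) := by
  apply isDerivation_law22_diagonal <;> simp

lemma isDerivation_law22_D₂ : IsDerivation law22 (diagonal ![0, 1, 1, 2, 1, 1, 2]) := by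
  apply isDerivation_law22_diagonal <;> simp [one_add_one_eq_two]

lemma half_smul_D₁_add_D₂ :
    (1 / 2 : ℝ) • (diagonal ![1, 0, 0, 0, 1, 1, 1] + diagonal ![0, 1, 1, 2, 1, 1, 2]) =
      (1 / 2 : ℝ) • diagonal (![1, 1, 1, 2, 2, 2, 3] : Fin 7 → ℝ) := by
  rw [diagonal_add]
  congr 2
  ext k
  fin_cases k <;> norm_num [Matrix.cons_val]

lemma IsDerivation.law22_diag_three {ψ : Matrix (Fin 7) (Fin 7) ℝ} (hψ : IsDerivation law22 ψ) :
    ψ 3 3 = ψ 1 1 + ψ 2 2 := by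
  refine hψ.diag_eq_add_diag isBilin_law22 one_ne_zero ?_ (fun l hl => ?_) fun l hl => ?_
  · simp [law22_bVec, c22]
  all_goals fin_cases l <;> simp_all [law22_bVec, c22]

lemma IsDerivation.law22_diag_six {ψ : Matrix (Fin 7) (Fin 7) ℝ} (hψ : IsDerivation law22 ψ) :
    ψ 6 6 = ψ 0 0 + ψ 3 3 := by
  refine hψ.diag_eq_add_diag isBilin_law22 two_ne_zero ?_ (fun l hl => ?_) fun l hl => ?_
  · simp [law22_bVec, c22]
  all_goals fin_cases l <;> simp_all [law22_bVec, c22]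

/-- `D₁, D₂` are derivations of `g_{2.2}` and
`φ = (1/2)(D₁+D₂) = (1/2)diag(1,1,1,2,2,2,3)` is a pre-Einstein derivation. -/
theorem stmt_9 :
    IsDerivation law22 (Matrix.diagonal (![1, 0, 0, 0, 1, 1, 1] : Fin 7 → ℝ)) ∧
    IsDerivation law22 (Matrix.diagonal (![0, 1, 1, 2, 1, 1, 2] : Fin 7 → ℝ)) ∧
    (1/2 : ℝ) • (Matrix.diagonal (![1, 0, 0, 0, 1, 1, 1] : Fin 7 → ℝ) +
        Matrix.diagonal (![0, 1, 1, 2, 1, 1, 2] : Fin 7 → ℝ)) =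
      (1/2 : ℝ) • Matrix.diagonal (![1, 1, 1, 2, 2, 2, 3] : Fin 7 → ℝ) ∧
    IsDerivation law22
      ((1/2 : ℝ) • Matrix.diagonal (![1, 1, 1, 2, 2, 2, 3] : Fin 7 → ℝ)) ∧
    (∀ ψ : Matrix (Fin 7) (Fin 7) ℝ, IsDerivation law22 ψ →
      Matrix.trace
        (((1/2 : ℝ) • Matrix.diagonal (![1, 1, 1, 2, 2, 2, 3] : Fin 7 → ℝ)) * ψ) =
        Matrix.trace ψ) := by
  refine ⟨isDerivation_law22_D₁, isDerivation_law22_D₂, half_smul_D₁_add_D₂, ?_, fun ψ hψ => ?_⟩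
  · rw [← half_smul_D₁_add_D₂]
    exact (isDerivation_law22_D₁.add isBilin_law22 isDerivation_law22_D₂).smul isBilin_law22 _
  · have trace_sub : trace (((1 / 2 : ℝ) • diagonal ![1, 1, 1, 2, 2, 2, 3]) * ψ) - trace ψ =
        (ψ 6 6 - ψ 0 0 - ψ 1 1 - ψ 2 2) / 2 := by
      simp only [trace, diag_apply, smul_mul, Matrix.smul_apply, diagonal_mul, smul_eq_mul,
        Fin.sum_univ_seven, cons_val]
      ring
    linarith [hψ.law22_diag_three, hψ.law22_diag_six]
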